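/- arXiv:1008.2228 — 2 statements merged into one kernel-verified Lean document; each statement's English description precedes it below -/
import Mathlib

section
/- For all i, j, h ∈ {0,1,…,d}: (a) if i < j, then E_i* A_h E_j* ≠ 0 if and only if h = j; (b) if h > i, then E_i* A_i E_h* = 0; (c) if h < j, then E_i* A_h E_j* ≠ 0 if and only if i = j. -/
open Finset Matrix

/-- Vertex set of the wreath product `K_{n 0} ≀ K_{n 1} ≀ ⋯ ≀ K_{n (d-1)}`
(paper indices `n_1, …, n_d` correspond to `n 0, …, n (d-1)`). -/
abbrev Vx (d : ℕ) (n : ℕ → ℕ) : Type := (i : Fin d) → Fin (n i)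

/-- `delta x y = 0` if `x = y`; otherwise `delta x y` is the largest (1-based)
index at which `x` and `y` differ. -/
def delta {d : ℕ} {n : ℕ → ℕ} (x y : Vx d n) : ℕ :=
  (Finset.univ.filter fun i => x i ≠ y i).sup fun i => (i : ℕ) + 1

/-- The `i`-th adjacency matrix of the wreath product: `(A i) x y = 1` iff `delta x y = i`. -/
noncomputable def A (d : ℕ) (n : ℕ → ℕ) (i : ℕ) : Matrix (Vx d n) (Vx d n) ℂ :=
  Matrix.of fun x y => if delta x y = i then 1 else 0

/-- The valencies: `k 0 = 1` and, for `1 ≤ i`, `k i = n_1 ⋯ n_{i-1} (n_i - 1)`,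
i.e. `k i = n 0 ⋯ n (i-2) * (n (i-1) - 1)`. -/
def k (n : ℕ → ℕ) (i : ℕ) : ℕ :=
  if i = 0 then 1 else (∏ j ∈ Finset.range (i - 1), n j) * (n (i - 1) - 1)

/-- The dual idempotent `E_i*` with respect to the base point `x₀`: the diagonal
0-1 matrix with `(E_i*)_{yy} = 1` iff `delta x₀ y = i`. -/
noncomputable def Es {d : ℕ} {n : ℕ → ℕ} (x₀ : Vx d n) (i : ℕ) :
    Matrix (Vx d n) (Vx d n) ℂ :=
  Matrix.of fun y z => if y = z ∧ delta x₀ y = i then 1 else 0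

/-- The all-ones matrix `J`. -/
noncomputable def Jm (d : ℕ) (n : ℕ → ℕ) : Matrix (Vx d n) (Vx d n) ℂ :=
  Matrix.of fun _ _ => 1

/-- The matrices `G i j`. -/
noncomputable def G {d : ℕ} {n : ℕ → ℕ} (x₀ : Vx d n) (i j : ℕ) :
    Matrix (Vx d n) (Vx d n) ℂ :=
  if i < j then ((k n j : ℂ))⁻¹ • (Es x₀ i * A d n j * Es x₀ j)
  else if j < i then ((k n j : ℂ))⁻¹ • (Es x₀ i * A d n i * Es x₀ j)
  else ((k n i : ℂ))⁻¹ • (Es x₀ i * Jm d n * Es x₀ i)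

/-- The span `U` of the matrices `G i j`, `i, j ∈ [d]`. -/
noncomputable def Uspan {d : ℕ} {n : ℕ → ℕ} (x₀ : Vx d n) :
    Submodule ℂ (Matrix (Vx d n) (Vx d n) ℂ) :=
  Submodule.span ℂ (Set.range fun p : Fin (d + 1) × Fin (d + 1) => G x₀ p.1 p.2)

/-- The Terwilliger algebra of the wreath product with respect to `x₀`. -/
noncomputable def Ter {d : ℕ} {n : ℕ → ℕ} (x₀ : Vx d n) :
    Subalgebra ℂ (Matrix (Vx d n) (Vx d n) ℂ) :=
  Algebra.adjoin ℂ
    ((Set.range fun i : Fin (d + 1) => A d n i) ∪ (Set.range fun i : Fin (d + 1) => Es x₀ i))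

/-- The matrices `F i h`, for `1 ≤ i ≤ d` and `0 ≤ h ≤ i - 1`. -/
noncomputable def F {d : ℕ} {n : ℕ → ℕ} (x₀ : Vx d n) (i h : ℕ) :
    Matrix (Vx d n) (Vx d n) ℂ :=
  if h < i - 1 then
    (∑ j ∈ Finset.range (h + 1), (k n j : ℂ))⁻¹ •
        (∑ j ∈ Finset.range (h + 1), Es x₀ i * A d n j * Es x₀ i)
      - (∑ j ∈ Finset.range (h + 2), (k n j : ℂ))⁻¹ •
          (∑ j ∈ Finset.range (h + 2), Es x₀ i * A d n j * Es x₀ i)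
  else
    (∑ j ∈ Finset.range i, (k n j : ℂ))⁻¹ •
        (∑ j ∈ Finset.range i, Es x₀ i * A d n j * Es x₀ i)
      - G x₀ i i

/-!
`δ` is an ultrametric on the vertices, so of any three pairwise distances the two largest agree.
Since `(E_i* A_h E_j*)_{yz}` is `1` when `δ(x₀, y) = i`, `δ(y, z) = h`, `δ(x₀, z) = j` and `0`
otherwise, this product is nonzero exactly when `(i, h, j)` are the distances of some triangle with
apex `x₀`. The ultrametric property rules out triples without a repeated maximum, and every value
in `{0, …, d}` is attained as a distance from any given vertex, which produces the triangles needed.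
-/

section Ultrametric

variable {d : ℕ} {n : ℕ → ℕ} {x y z : Vx d n} {m : ℕ}

theorem delta_le_iff : delta x y ≤ m ↔ ∀ i : Fin d, m ≤ i → x i = y i := by
  simp only [delta, Finset.sup_le_iff, mem_filter, mem_univ, true_and, Nat.succ_le_iff]
  exact forall_congr' fun i => by rw [← not_imp_not, not_lt, not_not]

theorem delta_self (x : Vx d n) : delta x x = 0 :=
  Nat.le_zero.1 (delta_le_iff.2 fun _ _ => rfl)

theorem delta_comm (x y : Vx d n) : delta x y = delta y x := by
  simp only [delta, ne_comm]

theorem delta_le_max (x y z : Vx d n) : delta x z ≤ max (delta x y) (delta y z) :=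
  delta_le_iff.2 fun i hi =>
    (delta_le_iff.1 le_rfl i (le_of_max_le_left hi)).trans
      (delta_le_iff.1 le_rfl i (le_of_max_le_right hi))

theorem delta_eq_of_delta_lt (h : delta x y < delta x z) : delta y z = delta x z := by
  have hxz : delta x z ≤ max (delta x y) (delta y z) := delta_le_max x y z
  have hyz : delta y z ≤ max (delta x y) (delta x z) := delta_comm x y ▸ delta_le_max y x z
  order

theorem delta_update (x : Vx d n) {i : Fin d} {a : Fin (n i)} (ha : x i ≠ a) :
    delta x (Function.update x i a) = i + 1 := by
  apply le_antisymm
  · refine delta_le_iff.2 fun j hj => ?_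
    have hji : j ≠ i := (Fin.lt_def.2 hj).ne'
    rw [Function.update_of_ne hji]
  · by_contra! hlt
    exact ha (by simpa using delta_le_iff.1 (Nat.le_of_lt_succ hlt) i le_rfl)

theorem exists_delta_eq (hn : ∀ i < d, 2 ≤ n i) (x : Vx d n) (hm : m ≤ d) :
    ∃ y, delta x y = m := by
  rcases m with _ | i
  · exact ⟨x, delta_self x⟩
  · have : Nontrivial (Fin (n i)) := Fin.nontrivial_iff_two_le.2 (hn i hm)
    obtain ⟨a, ha⟩ := exists_ne (x ⟨i, hm⟩)
    exact ⟨Function.update x ⟨i, hm⟩ a, delta_update x ha.symm⟩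

end Ultrametric

section TripleProduct

variable {d : ℕ} {n : ℕ → ℕ} {x₀ : Vx d n} {i j h : ℕ}

theorem Es_eq_diagonal (x₀ : Vx d n) (i : ℕ) :
    Es x₀ i = diagonal fun y => if delta x₀ y = i then 1 else 0 := by
  ext y z
  simp only [Es, of_apply, diagonal_apply, ite_and]

theorem Es_mul_A_mul_Es_apply (x₀ y z : Vx d n) (i h j : ℕ) :
    (Es x₀ i * A d n h * Es x₀ j) y z =
      if delta x₀ y = i ∧ delta y z = h ∧ delta x₀ z = j then 1 else 0 := by
  rw [Es_eq_diagonal, Es_eq_diagonal, mul_diagonal, diagonal_mul, A, of_apply]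
  simp only [mul_ite, mul_one, mul_zero, ite_and]
  split_ifs <;> rfl

theorem Es_mul_A_mul_Es_ne_zero_iff :
    Es x₀ i * A d n h * Es x₀ j ≠ 0 ↔
      ∃ y z, delta x₀ y = i ∧ delta y z = h ∧ delta x₀ z = j := by
  simp only [ne_eq, ← Matrix.ext_iff, Es_mul_A_mul_Es_apply, Matrix.zero_apply,
    ite_eq_right_iff, one_ne_zero, imp_false, not_forall, not_not]

theorem Es_mul_A_mul_Es_eq_zero_of_left_lt_right (hij : i < j) (hhj : h ≠ j) :
    Es x₀ i * A d n h * Es x₀ j = 0 := by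
  by_contra hne
  obtain ⟨y, z, rfl, rfl, rfl⟩ := Es_mul_A_mul_Es_ne_zero_iff.1 hne
  exact hhj (delta_eq_of_delta_lt hij)

theorem Es_mul_A_mul_Es_ne_zero_iff_of_left_lt_right (hn : ∀ i < d, 2 ≤ n i) (hj : j ≤ d)
    (hij : i < j) : Es x₀ i * A d n h * Es x₀ j ≠ 0 ↔ h = j := by
  constructor
  · exact not_imp_comm.1 (Es_mul_A_mul_Es_eq_zero_of_left_lt_right hij)
  · rintro rfl
    obtain ⟨y, rfl⟩ := exists_delta_eq hn x₀ (hij.le.trans hj)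
    obtain ⟨z, rfl⟩ := exists_delta_eq hn x₀ hj
    exact Es_mul_A_mul_Es_ne_zero_iff.2 ⟨y, z, rfl, delta_eq_of_delta_lt hij, rfl⟩

theorem Es_mul_A_mul_Es_ne_zero_iff_of_middle_lt_right (hn : ∀ i < d, 2 ≤ n i) (hj : j ≤ d)
    (hhj : h < j) : Es x₀ i * A d n h * Es x₀ j ≠ 0 ↔ i = j := by
  rw [Es_mul_A_mul_Es_ne_zero_iff]
  constructor
  · rintro ⟨y, z, rfl, rfl, rfl⟩
    rw [delta_comm y z, delta_comm x₀ z] at hhj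
    rw [delta_comm x₀ y, delta_comm x₀ z, delta_eq_of_delta_lt hhj]
  · rintro rfl
    obtain ⟨y, rfl⟩ := exists_delta_eq hn x₀ hj
    obtain ⟨z, rfl⟩ := exists_delta_eq hn y (hhj.le.trans hj)
    rw [delta_comm x₀ y] at hhj
    have hzy : delta x₀ z = delta x₀ y := by
      rw [delta_comm x₀ z, delta_comm x₀ y, delta_eq_of_delta_lt hhj]
    exact ⟨y, z, rfl, rfl, hzy⟩

end TripleProduct

/-- (a) if `i < j` then `E_i* A_h E_j* ≠ 0 ↔ h = j`;
(b) if `h > i` then `E_i* A_i E_h* = 0`;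
(c) if `h < j` then `E_i* A_h E_j* ≠ 0 ↔ i = j`. -/
theorem stmt12 (d : ℕ) (hd : 1 ≤ d) (n : ℕ → ℕ) (hn : ∀ i < d, 2 ≤ n i)
    (x₀ : Vx d n) (i j h : ℕ) (hi : i ≤ d) (hj : j ≤ d) (hh : h ≤ d) :
    (i < j → (Es x₀ i * A d n h * Es x₀ j ≠ 0 ↔ h = j)) ∧
    (h > i → Es x₀ i * A d n i * Es x₀ h = 0) ∧
    (h < j → (Es x₀ i * A d n h * Es x₀ j ≠ 0 ↔ i = j)) :=
  ⟨Es_mul_A_mul_Es_ne_zero_iff_of_left_lt_right hn hj,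
    fun hih => Es_mul_A_mul_Es_eq_zero_of_left_lt_right hih hih.ne,
    Es_mul_A_mul_Es_ne_zero_iff_of_middle_lt_right hn hj⟩
end

section
/- For all i, j, h ∈ {0,1,…,d}: A_h G_{ij} = k_h G_{ij} if h < i; A_h G_{ij} = k_i (G_{0j} + G_{1j} + ⋯ + G_{i−1,j}) + (k_i − (k_0 + k_1 + ⋯ + k_{i−1})) G_{ij} if h = i; and A_h G_{ij} = k_i G_{hj} if h > i. -/
open Finset Matrix

/-!
Every triple of vertices is isosceles for the ultrametric `delta`, its two largest distances being
equal. With `u i` the indicator vector of the sphere of radius `i` about `x₀`, this says first that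
`G i j = (k j)⁻¹ u i (u j)ᵀ`, so that only the vectors `A h *ᵥ u i` matter. The entry of
`A h *ᵥ u i` at `y` is the size of the intersection of the spheres of radius `h` about `y` and `i`
about `x₀`, and by the isosceles property again two spheres of different radii are nested or
disjoint, while two spheres of equal radius `i` coincide, are disjoint, or (when `delta x₀ y = i`)
meet in the sphere about `y` without the ball `{w | delta x₀ w < i}`.
-/

theorem sum_vecMulVec {ι l m α : Type*} [NonUnitalNonAssocSemiring α] (s : Finset ι)
    (u : ι → l → α) (v : m → α) :
    vecMulVec (∑ a ∈ s, u a) v = ∑ a ∈ s, vecMulVec (u a) v := by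
  ext
  simp [vecMulVec_apply, Matrix.sum_apply, sum_mul]

namespace Vx

variable {d : ℕ} {n : ℕ → ℕ}

theorem delta_le_iff {x y : Vx d n} {m : ℕ} :
    delta x y ≤ m ↔ ∀ i : Fin d, m ≤ i → x i = y i := by
  simp only [delta, Finset.sup_le_iff, mem_filter_univ, Nat.succ_le_iff]
  exact forall_congr' fun i => by rw [← not_le, not_imp_not]

theorem delta_comm (x y : Vx d n) : delta x y = delta y x := by
  simp only [delta, ne_comm]

theorem delta_le_max (x y z : Vx d n) : delta x z ≤ max (delta x y) (delta y z) :=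
  delta_le_iff.2 fun i hi =>
    (delta_le_iff.1 le_rfl i ((le_max_left _ _).trans hi)).trans
      (delta_le_iff.1 le_rfl i ((le_max_right _ _).trans hi))

theorem delta_eq_max_of_ne {x y z : Vx d n} (hne : delta x y ≠ delta x z) :
    delta y z = max (delta x y) (delta x z) := by
  have hyz := delta_le_max y x z
  have hxy := delta_le_max x z y
  have hxz := delta_le_max x y z
  rw [delta_comm y x] at hyz
  rw [delta_comm z y] at hxy
  omega

/-- The vertices in relation `i` with `x`: the sphere of radius `i` about `x` for the ultrametric
`delta`. -/
def sphere (x : Vx d n) (i : ℕ) : Finset (Vx d n) := {y | delta x y = i}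

/-- The open ball of radius `i` about `x` for the ultrametric `delta`. As `delta` takes natural
values, `ball x (i + 1)` is the closed ball of radius `i`. -/
def ball (x : Vx d n) (i : ℕ) : Finset (Vx d n) := {y | delta x y < i}

@[simp]
theorem mem_sphere {x y : Vx d n} {i : ℕ} : y ∈ sphere x i ↔ delta x y = i := by
  simp [sphere]

@[simp]
theorem mem_ball {x y : Vx d n} {i : ℕ} : y ∈ ball x i ↔ delta x y < i := by
  simp [ball]

theorem card_ball_succ (x : Vx d n) {i : ℕ} (hi : i ≤ d) :
    #(ball x (i + 1)) = ∏ j ∈ range i, n j := by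
  have ball_eq_piFinset : ball x (i + 1) =
      Fintype.piFinset fun j : Fin d => if (j : ℕ) < i then univ else {x j} := by
    ext y
    simp only [mem_ball, Nat.lt_succ_iff, delta_le_iff, Fintype.mem_piFinset]
    refine forall_congr' fun j => ?_
    split_ifs with hj
    · simp [hj]
    · simp [not_lt.1 hj, eq_comm]
  calc #(ball x (i + 1))
      = ∏ j : Fin d, if (j : ℕ) < i then n j else 1 := by
        simp [ball_eq_piFinset, Fintype.card_piFinset, apply_ite card]
    _ = ∏ j ∈ range d, if j < i then n j else 1 :=
        Fin.prod_univ_eq_prod_range (fun j => if j < i then n j else 1) d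
    _ = ∏ j ∈ range i, n j := by
        rw [← prod_filter]
        congr 1
        ext j
        simp only [mem_filter, mem_range]
        omega

theorem sphere_eq_ball_sdiff_ball (x : Vx d n) (i : ℕ) :
    sphere x i = ball x (i + 1) \ ball x i := by
  ext y
  simp only [mem_sphere, mem_sdiff, mem_ball]
  omega

theorem ball_mono (x : Vx d n) : Monotone (ball x) :=
  fun _ _ hij _ hy => mem_ball.2 ((mem_ball.1 hy).trans_le hij)

theorem card_sphere (x : Vx d n) {i : ℕ} (hi : i ≤ d) : #(sphere x i) = k n i := by
  rw [sphere_eq_ball_sdiff_ball, card_sdiff_of_subset (ball_mono x i.le_succ),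
    card_ball_succ x hi]
  cases i with
  | zero => simp [k, ball]
  | succ i =>
    rw [card_ball_succ x (Nat.le_of_succ_le hi), prod_range_succ]
    simp [k, Nat.mul_sub]

theorem card_ball (x : Vx d n) {i : ℕ} (hi : i ≤ d) :
    #(ball x i) = ∑ r ∈ range i, k n r := by
  rw [card_eq_sum_card_fiberwise (f := delta x) (t := range i) (by intro y; simp)]
  refine sum_congr rfl fun r hr => ?_
  have hri : r < i := mem_range.1 hr
  rw [← card_sphere x (hri.le.trans hi)]
  congr 1
  ext y
  simp only [mem_filter, mem_ball, mem_sphere]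
  omega

theorem card_sphere_inter_sphere_of_lt (x y : Vx d n) {h i : ℕ} (hh : h ≤ d) (hhi : h < i) :
    #(sphere y h ∩ sphere x i) = if delta x y = i then k n h else 0 := by
  split_ifs with hxy
  · rw [← card_sphere y hh, inter_eq_left.2]
    intro w hw
    have hyx := delta_comm y x
    have hxw := delta_eq_max_of_ne (x := y) (y := x) (z := w)
    simp only [mem_sphere] at hw ⊢
    omega
  · rw [card_eq_zero, ← disjoint_iff_inter_eq_empty, disjoint_left]
    intro w hyw hxw
    have hyw' := delta_eq_max_of_ne (x := x) (y := y) (z := w)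
    have hxw' := delta_le_max x y w
    simp only [mem_sphere] at hyw hxw
    omega

theorem sphere_eq_sphere_of_delta_lt {x y : Vx d n} {i : ℕ} (hxy : delta x y < i) :
    sphere x i = sphere y i := by
  ext w
  have hyw := delta_eq_max_of_ne (x := x) (y := y) (z := w)
  have hxw := delta_eq_max_of_ne (x := y) (y := x) (z := w)
  rw [delta_comm y x] at hxw
  simp only [mem_sphere]
  omega

theorem disjoint_sphere_of_lt_delta {x y : Vx d n} {i : ℕ} (hxy : i < delta x y) :
    Disjoint (sphere y i) (sphere x i) := by
  refine disjoint_left.2 fun w hyw hxw => ?_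
  have hle := delta_le_max x w y
  rw [delta_comm w y, mem_sphere.1 hyw, mem_sphere.1 hxw, max_self] at hle
  omega

theorem ball_subset_sphere {x y : Vx d n} {i : ℕ} (hxy : delta x y = i) :
    ball x i ⊆ sphere y i := by
  intro w hw
  rw [mem_ball] at hw
  rw [mem_sphere, delta_eq_max_of_ne (x := x) (by omega)]
  omega

theorem sphere_inter_sphere_of_delta_eq {x y : Vx d n} {i : ℕ} (hxy : delta x y = i) :
    sphere y i ∩ sphere x i = sphere y i \ ball x i := by
  ext w
  have hxw := delta_le_max x y w
  simp only [mem_inter, mem_sdiff, mem_sphere, mem_ball]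
  omega

theorem card_sphere_inter_sphere_add_sum {x y : Vx d n} {i : ℕ} (hi : i ≤ d)
    (hxy : delta x y = i) :
    #(sphere y i ∩ sphere x i) + ∑ r ∈ range i, k n r = k n i := by
  rw [sphere_inter_sphere_of_delta_eq hxy, ← card_ball x hi,
    card_sdiff_add_card_eq_card (ball_subset_sphere hxy), card_sphere y hi]

/-- The indicator vector of `sphere x i`. -/
noncomputable def sphereVec (x : Vx d n) (i : ℕ) : Vx d n → ℂ :=
  fun y => if delta x y = i then 1 else 0

theorem A_mulVec_sphereVec_apply (x y : Vx d n) (h i : ℕ) :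
    (A d n h *ᵥ sphereVec x i) y = #(sphere y h ∩ sphere x i) := by
  simp [mulVec, dotProduct, A, sphereVec, sphere, ← filter_and, ← ite_and, and_comm]

theorem A_mulVec_sphereVec_of_lt (x : Vx d n) {h i : ℕ} (hh : h ≤ d) (hhi : h < i) :
    A d n h *ᵥ sphereVec x i = (k n h : ℂ) • sphereVec x i := by
  ext y
  rw [A_mulVec_sphereVec_apply, card_sphere_inter_sphere_of_lt x y hh hhi]
  simp [sphereVec]

theorem A_mulVec_sphereVec_of_gt (x : Vx d n) {h i : ℕ} (hi : i ≤ d) (hih : i < h) :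
    A d n h *ᵥ sphereVec x i = (k n i : ℂ) • sphereVec x h := by
  ext y
  rw [A_mulVec_sphereVec_apply, inter_comm, card_sphere_inter_sphere_of_lt y x hi hih]
  simp [sphereVec, delta_comm y x]

theorem A_mulVec_sphereVec_self (x : Vx d n) {i : ℕ} (hi : i ≤ d) :
    A d n i *ᵥ sphereVec x i = (k n i : ℂ) • ∑ r ∈ range i, sphereVec x r
      + ((k n i : ℂ) - ∑ r ∈ range i, (k n r : ℂ)) • sphereVec x i := by
  ext y
  rw [A_mulVec_sphereVec_apply]
  simp only [Pi.add_apply, Pi.smul_apply, Finset.sum_apply, sphereVec, sum_ite_eq, mem_range,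
    smul_eq_mul]
  rcases lt_trichotomy (delta x y) i with hlt | heq | hgt
  · rw [sphere_eq_sphere_of_delta_lt hlt, inter_self, card_sphere y hi]
    simp [hlt, hlt.ne]
  · rw [← card_sphere_inter_sphere_add_sum hi heq]
    simp [heq]
  · rw [disjoint_iff_inter_eq_empty.1 (disjoint_sphere_of_lt_delta hgt)]
    simp [hgt.not_gt, hgt.ne']

theorem Es_eq_diagonal (x : Vx d n) (i : ℕ) : Es x i = diagonal (sphereVec x i) := by
  ext y z
  simp [Es, sphereVec, diagonal_apply, ite_and]

theorem Es_mul_mul_Es_eq_vecMulVec (x : Vx d n) {i j : ℕ} {M : Matrix (Vx d n) (Vx d n) ℂ}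
    (hM : ∀ y z, delta x y = i → delta x z = j → M y z = 1) :
    Es x i * M * Es x j = vecMulVec (sphereVec x i) (sphereVec x j) := by
  ext y z
  simp only [Es_eq_diagonal, mul_diagonal, diagonal_mul, vecMulVec_apply, sphereVec]
  split_ifs with hy hz
  · simp [hM y z hy hz]
  all_goals simp

theorem G_eq_vecMulVec (x : Vx d n) (i j : ℕ) :
    G x i j = vecMulVec (sphereVec x i) ((k n j : ℂ)⁻¹ • sphereVec x j) := by
  have delta_eq_max (hij : i ≠ j) (y z : Vx d n) (hy : delta x y = i) (hz : delta x z = j) :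
      delta y z = max i j := by
    rw [delta_eq_max_of_ne (x := x) (by rwa [hy, hz]), hy, hz]
  rw [vecMulVec_smul]
  rcases lt_trichotomy i j with hlt | rfl | hgt
  · rw [G, if_pos hlt, Es_mul_mul_Es_eq_vecMulVec]
    intro y z hy hz
    simp [A, delta_eq_max hlt.ne y z hy hz, hlt.le]
  · rw [G, if_neg (lt_irrefl i), if_neg (lt_irrefl i), Es_mul_mul_Es_eq_vecMulVec]
    simp [Jm]
  · rw [G, if_neg hgt.not_gt, if_pos hgt, Es_mul_mul_Es_eq_vecMulVec]
    intro y z hy hz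
    simp [A, delta_eq_max hgt.ne' y z hy hz, hgt.le]

end Vx

/-- `A h * G i j = k h • G i j` if `h < i`;
`A i * G i j = k i • (G 0 j + ⋯ + G (i-1) j) + (k i - (k 0 + ⋯ + k (i-1))) • G i j`;
and `A h * G i j = k i • G h j` if `h > i`. -/
theorem stmt17 (d : ℕ) (hd : 1 ≤ d) (n : ℕ → ℕ) (hn : ∀ i < d, 2 ≤ n i)
    (x₀ : Vx d n) (i j h : ℕ) (hi : i ≤ d) (hj : j ≤ d) (hh : h ≤ d) :
    (h < i → A d n h * G x₀ i j = (k n h : ℂ) • G x₀ i j) ∧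
    (h = i → A d n h * G x₀ i j
        = (k n i : ℂ) • (∑ r ∈ Finset.range i, G x₀ r j)
          + ((k n i : ℂ) - ∑ r ∈ Finset.range i, (k n r : ℂ)) • G x₀ i j) ∧
    (h > i → A d n h * G x₀ i j = (k n i : ℂ) • G x₀ h j) := by
  have A_mul_G : A d n h * G x₀ i j =
      vecMulVec (A d n h *ᵥ Vx.sphereVec x₀ i) ((k n j : ℂ)⁻¹ • Vx.sphereVec x₀ j) := by
    rw [Vx.G_eq_vecMulVec, mul_vecMulVec]
  rw [A_mul_G]
  simp only [Vx.G_eq_vecMulVec, ← sum_vecMulVec, ← smul_vecMulVec, ← add_vecMulVec]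
  refine ⟨fun hlt => ?_, ?_, fun hgt => ?_⟩
  · rw [Vx.A_mulVec_sphereVec_of_lt x₀ hh hlt]
  · rintro rfl
    rw [Vx.A_mulVec_sphereVec_self x₀ hh]
  · rw [Vx.A_mulVec_sphereVec_of_gt x₀ hi hgt]
end
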